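/- arXiv:1505.05446 — 2 statements merged into one kernel-verified Lean document; each statement's English description precedes it below -/
import Mathlib

section
/- Let S be a nonempty connected spacelike regular surface in Minkowski space 𝕃³ satisfying property 𝒫*, let Π₀ be a spacelike plane such that C = Π₀ ∩ S is a non-degenerate circle with center P, and let L be the line through P in the direction ⟨·,·⟩₁-orthogonal to the direction of Π₀. Then L ∩ S ≠ ∅. -/
noncomputable section

open Module
open scoped RealInnerProductSpace

abbrev E3 : Type := EuclideanSpace ℝ (Fin 3)
abbrev E2 : Type := EuclideanSpace ℝ (Fin 2)

/-- `f : E2 → E3` restricted to the open set `U` is a local parametrization of the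
surface `S` around the point `p`: it is smooth, has injective derivative at every
point of `U`, and is a homeomorphism onto its image `f '' U`, which is an open
neighborhood of `p` in `S` for the subspace topology. -/
def IsChartAt (S : Set E3) (p : E3) (f : E2 → E3) (U : Set E2) : Prop :=
  IsOpen U ∧
  ContDiffOn ℝ (⊤ : ℕ∞) f U ∧
  (∀ u ∈ U, Function.Injective (fderiv ℝ f u)) ∧
  p ∈ f '' U ∧
  (∃ W : Set E3, IsOpen W ∧ f '' U = W ∩ S) ∧
  (∃ φ : U ≃ₜ (f '' U), ∀ u : U, (φ u : E3) = f u)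

/-- A regular surface in ℝ³. -/
def IsRegularSurface (S : Set E3) : Prop :=
  ∀ p ∈ S, ∃ f U, IsChartAt S p f U

/-- A plane: a 2-dimensional affine subspace of ℝ³. -/
def IsPlane (Pl : AffineSubspace ℝ E3) : Prop := finrank ℝ Pl.direction = 2

/-- A line: a 1-dimensional affine subspace of ℝ³. -/
def IsLine (L : AffineSubspace ℝ E3) : Prop := finrank ℝ L.direction = 1

/-- `C` is the circle in the plane `Pl` of center `c` and radius `r ≥ 0`. -/
def IsCircleIn (Pl : AffineSubspace ℝ E3) (c : E3) (r : ℝ) (C : Set E3) : Prop :=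
  c ∈ Pl ∧ 0 ≤ r ∧ C = {x ∈ (Pl : Set E3) | ‖x - c‖ = r}

/-- Property 𝒫: every plane meeting `S` meets it in a (possibly degenerate) circle. -/
def PropertyP (S : Set E3) : Prop :=
  ∀ Pl : AffineSubspace ℝ E3, IsPlane Pl → ((Pl : Set E3) ∩ S).Nonempty →
    ∃ c r, IsCircleIn Pl c r ((Pl : Set E3) ∩ S)

/-- The Minkowski bilinear form ⟨x, y⟩₁ = x₁y₁ + x₂y₂ − x₃y₃ on ℝ³. -/
def mink (x y : E3) : ℝ := x 0 * y 0 + x 1 * y 1 - x 2 * y 2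

/-- A spacelike plane: a plane on whose direction the Minkowski form is positive definite. -/
def IsSpacelikePlane (Pl : AffineSubspace ℝ E3) : Prop :=
  IsPlane Pl ∧ ∀ v ∈ Pl.direction, v ≠ 0 → 0 < mink v v

/-- `C` is the circle (for the Minkowski-induced metric) in the spacelike plane `Pl`
of center `c` and radius `r ≥ 0`. -/
def IsMCircleIn (Pl : AffineSubspace ℝ E3) (c : E3) (r : ℝ) (C : Set E3) : Prop :=
  c ∈ Pl ∧ 0 ≤ r ∧ C = {x ∈ (Pl : Set E3) | mink (x - c) (x - c) = r ^ 2}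

/-- Property 𝒫*: every spacelike plane meeting `S` meets it in a (possibly degenerate) circle. -/
def PropertyPStar (S : Set E3) : Prop :=
  ∀ Pl : AffineSubspace ℝ E3, IsSpacelikePlane Pl → ((Pl : Set E3) ∩ S).Nonempty →
    ∃ c r, IsMCircleIn Pl c r ((Pl : Set E3) ∩ S)

/-- The tangent plane associated to a parametrization `f` at the parameter `u`:
the image of the derivative of `f` at `u`. -/
def TangentPlane (f : E2 → E3) (u : E2) : Submodule ℝ E3 :=
  LinearMap.range (fderiv ℝ f u : E2 →ₗ[ℝ] E3)

/-- A spacelike regular surface in 𝕃³: a regular surface all of whose tangent planes are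
2-dimensional subspaces on which the Minkowski form is positive definite. -/
def IsSpacelikeSurface (S : Set E3) : Prop :=
  ∀ p ∈ S, ∃ f U, IsChartAt S p f U ∧
    ∀ u ∈ U, f u = p →
      finrank ℝ (TangentPlane f u) = 2 ∧
      ∀ v ∈ TangentPlane f u, v ≠ 0 → 0 < mink v v

/-!
Scale so that `C` has radius `1` about `P`, with orthonormal `u, v` along `Π₀` and `n` a unit
timelike normal. For `|a| < 1` the plane through `P` spanned by `u` and `v + a n` is spacelike and
meets `S` in a circle through `P ± u`, of equation `x² + (1 - a²) y² = 2 b y + 1` in the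
coordinates `P + x u + y (v + a n)`. Its tangent `b u + v + a n` at `P + u` lies in the tangent
plane `T` of `S`. Since `T` contains `v` and is spacelike, it meets the plane of `u` and `n` in a
line `ℝ (m u + n)` with `|m| > 1`, so `b = m a` for every `a`.

Let `s ∈ (-1, 1)` be the root of `s² + 2 m s + 1 = 0`. In the plane through `P + v` and `P + s n`
parallel to `u`, the circle with diameter from `P + v` to `P + s n` has the endpoints of its
diameter parallel to `u` on `S`, by the equation for `a = s`, `y = 1/2`. The section of `S` by
this plane is a circle containing three points of that circle, hence equal to it, and `P + s n`
belongs to `S`.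
-/

open Filter Topology Asymptotics

section TangentCone

variable {𝕜 E F : Type*} [NontriviallyNormedField 𝕜]
  [NormedAddCommGroup E] [NormedSpace 𝕜 E] [NormedAddCommGroup F] [NormedSpace 𝕜 F]

theorem exists_tendsto_of_isInducing_domRestrict {ι X Y : Type*} [TopologicalSpace X]
    [TopologicalSpace Y] {f : X → Y} {U : Set X} {u : X} (hu : u ∈ U)
    (hU : IsInducing (U.domRestrict f)) {l : Filter ι} {y : ι → Y} (hy : Tendsto y l (𝓝 (f u)))
    (hyU : ∀ᶠ i in l, y i ∈ f '' U) :
    ∃ g : ι → X, Tendsto g l (𝓝[U] u) ∧ ∀ᶠ i in l, f (g i) = y i := by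
  have hlift : ∀ i, ∃ x : U, y i ∈ f '' U → f x = y i := fun i => by
    by_cases hi : y i ∈ f '' U
    · obtain ⟨x, hxU, hx⟩ := hi
      exact ⟨⟨x, hxU⟩, fun _ => hx⟩
    · exact ⟨⟨u, hu⟩, fun h => absurd h hi⟩
  choose g hg using hlift
  have hfg : ∀ᶠ i in l, f (g i) = y i := hyU.mono hg
  have hgu : Tendsto g l (𝓝 ⟨u, hu⟩) :=
    hU.tendsto_nhds_iff.2 (hy.congr' (hfg.mono fun _ => Eq.symm))
  exact ⟨fun i => g i, tendsto_nhdsWithin_iff.2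
    ⟨(continuous_subtype_val.tendsto _).comp hgu, .of_forall fun i => (g i).2⟩, hfg⟩

theorem tangentConeAt_image_subset_range {f : E → F} {f' : E →L[𝕜] F} {U : Set E} {u : E}
    (hu : u ∈ U) (hf : HasFDerivWithinAt f f' U u) (hf' : IsClosedEmbedding f')
    (hU : IsInducing (U.domRestrict f)) :
    tangentConeAt 𝕜 (f '' U) (f u) ⊆ Set.range f' := by
  intro y hy
  obtain ⟨ι, l, _, c, d, hd, hdU, hcd⟩ := exists_fun_of_mem_tangentConeAt hy
  obtain ⟨g, hg, hfg⟩ := exists_tendsto_of_isInducing_domRestrict hu hU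
    (by simpa using hd.const_add (f u)) hdU
  have hrem : (fun i => f (g i) - f u - f' (g i - u)) =o[l] d := by
    have hgO : (fun i => f (g i) - f u) =ᶠ[l] d := hfg.mono fun i hi => by simp [hi]
    exact (hf.isLittleO.comp_tendsto hg).trans_isBigO
      (((hf.isTheta_sub hf'.isInducing).isBigO_symm.comp_tendsto hg).trans_eventuallyEq hgO)
  have hrem_smul : Tendsto (fun i => c i • (f (g i) - f u - f' (g i - u))) l (𝓝 0) :=
    (isLittleO_one_iff ℝ).1
      (((isBigO_refl c l).smul_isLittleO hrem).trans_isBigO (hcd.isBigO_one ℝ))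
  have hlim : Tendsto (fun i => f' (c i • (g i - u))) l (𝓝 y) := by
    have hsub := hcd.sub hrem_smul
    rw [sub_zero] at hsub
    refine hsub.congr' (hfg.mono fun i hi => ?_)
    change c i • d i - c i • (f (g i) - f u - f' (g i - u)) = f' (c i • (g i - u))
    rw [map_smul, hi, ← smul_sub, add_sub_cancel_left, sub_sub_cancel]
  exact hf'.isClosed_range.mem_of_tendsto hlim (.of_forall fun i => Set.mem_range_self _)

theorem mem_tangentConeAt_of_ellipse_subset [NormedSpace ℝ E] {S : Set E} {c a b : E}
    (hS : ∀ t : ℝ, c + (Real.cos t • a + Real.sin t • b) ∈ S) :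
    b ∈ tangentConeAt ℝ S (c + a) := by
  have hderiv : HasDerivAt (fun t : ℝ => c + (Real.cos t • a + Real.sin t • b)) b 0 := by
    simpa using (((Real.hasDerivAt_cos 0).smul_const a).add
      ((Real.hasDerivAt_sin 0).smul_const b)).const_add c
  have hmaps := hderiv.hasFDerivAt.hasFDerivWithinAt (s := Set.univ) |>.mapsTo_tangent_cone
  have hmem := hmaps (show (1 : ℝ) ∈ tangentConeAt ℝ Set.univ 0 by simp)
  simp only [ContinuousLinearMap.toSpanSingleton_apply, one_smul, Real.cos_zero, Real.sin_zero,
    zero_smul, add_zero, Set.image_univ] at hmem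
  exact tangentConeAt_mono (Set.range_subset_iff.2 hS) hmem

end TangentCone

section LinearAlgebra

variable {K V : Type*} [Field K] [AddCommGroup V] [Module K V]

theorem exists_mem_ne_zero_apply_eq_zero {W : Submodule K V} (hW : 1 < finrank K W)
    (φ : V →ₗ[K] K) : ∃ w ∈ W, w ≠ 0 ∧ φ w = 0 := by
  have : FiniteDimensional K W := .of_finrank_pos (by omega)
  obtain ⟨w, hw, hw0⟩ := Submodule.exists_mem_ne_zero_of_ne_bot
    ((φ.domRestrict W).ker_ne_bot_of_finrank_lt (by rwa [finrank_self]))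
  exact ⟨w, w.2, by simpa using hw0, by simpa using hw⟩

theorem mul_eq_mul_of_smul_add_smul_mem {T : Submodule K V} {u n : V} (hn : n ∉ T)
    {x z x' z' : K} (h : x • u + z • n ∈ T) (h' : x' • u + z' • n ∈ T) : x * z' = x' * z := by
  have hmem : (x * z' - x' * z) • n ∈ T := by
    convert T.sub_mem (T.smul_mem x h') (T.smul_mem x' h) using 1
    module
  by_contra hne
  exact hn ((T.smul_mem_iff (sub_ne_zero.2 hne)).1 hmem)

variable {B : LinearMap.BilinForm K V} {u w : V}

theorem apply_smul_add_smul_self (hB : B.IsSymm) (huw : B u w = 0) (x y : K) :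
    B (x • u + y • w) (x • u + y • w) = x ^ 2 * B u u + y ^ 2 * B w w := by
  have hwu : B w u = 0 := by rw [hB.eq, huw]
  simp only [map_add, map_smul, LinearMap.add_apply, LinearMap.smul_apply, smul_eq_mul, huw, hwu]
  ring

theorem apply_sub_sub_self (hB : B.IsSymm) (x c : V) :
    B (x - c) (x - c) = B x x - 2 * B c x + B c c := by
  have hxc : B x c = B c x := hB.eq x c
  simp only [map_sub, LinearMap.sub_apply, hxc]
  ring

theorem finrank_span_pair_eq_two (hB : B.IsSymm) (hu : B u u ≠ 0) (hw : B w w ≠ 0)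
    (huw : B u w = 0) : finrank K (Submodule.span K {u, w}) = 2 := by
  have hwu : B w u = 0 := by rw [hB.eq, huw]
  have hli : LinearIndependent K ![u, w] := by
    refine LinearIndependent.pair_iff.2 fun s t hst => ⟨?_, ?_⟩
    · simpa [huw, hu] using congrArg (B u) hst
    · simpa [hwu, hw] using congrArg (B w) hst
  rw [← Matrix.range_cons_cons_empty u w ![], finrank_span_eq_card hli, Fintype.card_fin]

end LinearAlgebra

section PosDefOn

variable {E : Type*} [AddCommGroup E] [Module ℝ E] {B : LinearMap.BilinForm ℝ E}

/-- The bilinear form `B` is positive definite on the subspace `W`; for the Minkowski form this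
says that `W` is a spacelike subspace. -/
def PosDefOn (B : LinearMap.BilinForm ℝ E) (W : Submodule ℝ E) : Prop :=
  ∀ w ∈ W, w ≠ 0 → 0 < B w w

theorem exists_pos_smul_apply_self_eq {x : E} {k : ℝ} (hk : 0 < k / B x x) :
    ∃ t : ℝ, 0 < t ∧ B (t • x) (t • x) = k := by
  have hx : B x x ≠ 0 := fun h => by simp [h] at hk
  refine ⟨√(k / B x x), Real.sqrt_pos.2 hk, ?_⟩
  simp only [map_smul, LinearMap.smul_apply, smul_eq_mul]
  rw [← mul_assoc, Real.mul_self_sqrt hk.le, div_mul_cancel₀ k hx]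

theorem posDefOn_span_pair (hB : B.IsSymm) {u w : E} (hu : 0 < B u u) (hw : 0 < B w w)
    (huw : B u w = 0) : PosDefOn B (Submodule.span ℝ {u, w}) := by
  intro v hv hv0
  obtain ⟨x, y, rfl⟩ := Submodule.mem_span_pair.1 hv
  rw [apply_smul_add_smul_self hB huw]
  by_cases hx : x = 0
  · have hy : y ≠ 0 := fun hy => hv0 (by simp [hx, hy])
    positivity
  · positivity

theorem PosDefOn.apply_self_neg_of_orthogonal [FiniteDimensional ℝ E] (hB : B.IsSymm)
    {W : Submodule ℝ E} (hW : PosDefOn B W) (hdim : finrank ℝ E ≤ finrank ℝ W + 1)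
    (hneg : ∃ z, B z z < 0) {n : E} (hn0 : n ≠ 0) (hn : ∀ w ∈ W, B n w = 0) : B n n < 0 := by
  have hnW : n ∉ W := fun hmem => (hW n hmem hn0).ne' (hn n hmem)
  have htop : W ⊔ Submodule.span ℝ {n} = ⊤ := by
    have hlt := Submodule.finrank_lt_finrank_of_lt (Submodule.lt_sup_iff_notMem.2 hnW)
    exact Submodule.eq_top_of_finrank_eq (le_antisymm (Submodule.finrank_le _) (by omega))
  obtain ⟨z, hz⟩ := hneg
  obtain ⟨w, hw, n', hn', rfl⟩ := Submodule.mem_sup.1 (htop ▸ Submodule.mem_top : z ∈ _)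
  obtain ⟨t, rfl⟩ := Submodule.mem_span_singleton.1 hn'
  have hww : 0 ≤ B w w := by
    rcases eq_or_ne w 0 with rfl | hw0
    · simp
    · exact (hW w hw hw0).le
  have hwn : B w n = 0 := by rw [hB.eq, hn w hw]
  simp only [map_add, map_smul, LinearMap.add_apply, LinearMap.smul_apply, smul_eq_mul,
    hwn, hn w hw] at hz
  nlinarith [mul_self_nonneg t]

end PosDefOn

section Sphere

variable {E : Type*} [NormedAddCommGroup E] [NormedSpace ℝ E] {B : LinearMap.BilinForm ℝ E}

theorem mem_of_tangentConeAt_subset_of_sphere_subset (hB : B.IsSymm) {S : Set E}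
    {W T : Submodule ℝ E} (hW : PosDefOn B W) {p c u w : E} (hc : c ∈ W) (hu : u ∈ W)
    (huc : u ≠ c) (hS : ∀ x ∈ W, B (x - c) (x - c) = B (u - c) (u - c) → p + x ∈ S)
    (hT : tangentConeAt ℝ S (p + u) ⊆ T) (hw : w ∈ W) (horth : B (u - c) w = 0) : w ∈ T := by
  rcases eq_or_ne w 0 with rfl | hw0
  · exact T.zero_mem
  have hρ : 0 < B (u - c) (u - c) := hW _ (W.sub_mem hu hc) (sub_ne_zero.2 huc)
  obtain ⟨t, ht, htw⟩ := exists_pos_smul_apply_self_eq (div_pos hρ (hW w hw hw0))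
  refine (T.smul_mem_iff ht.ne').1 (hT ?_)
  rw [show p + u = p + c + (u - c) by abel]
  refine mem_tangentConeAt_of_ellipse_subset fun θ => ?_
  rw [add_assoc]
  refine hS _ (W.add_mem hc (W.add_mem (W.smul_mem _ (W.sub_mem hu hc))
    (W.smul_mem _ (W.smul_mem t hw)))) ?_
  rw [add_sub_cancel_left]
  have horth_smul : B (u - c) (t • w) = 0 := by rw [map_smul, horth, smul_zero]
  rw [apply_smul_add_smul_self hB horth_smul, htw, ← add_mul, Real.cos_sq_add_sin_sq, one_mul]

end Sphere

section Minkowski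

/-- The Minkowski form `mink` as a bundled bilinear form. -/
def minkForm : LinearMap.BilinForm ℝ E3 :=
  LinearMap.mk₂ ℝ mink
    (fun x y z => by simp only [mink, PiLp.add_apply]; ring)
    (fun a x y => by simp only [mink, PiLp.smul_apply, smul_eq_mul]; ring)
    (fun x y z => by simp only [mink, PiLp.add_apply]; ring)
    (fun a x y => by simp only [mink, PiLp.smul_apply, smul_eq_mul]; ring)

theorem minkForm_apply (x y : E3) : minkForm x y = mink x y := rfl

theorem isSymm_minkForm : minkForm.IsSymm :=
  ⟨fun x y => by simp only [minkForm_apply, mink]; ring⟩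

theorem exists_minkForm_apply_self_neg : ∃ z, minkForm z z < 0 :=
  ⟨EuclideanSpace.single 2 1, by simp [minkForm_apply, mink]⟩

/-- The tangent directions of `S` at `q` span a spacelike subspace. Stated with `tangentConeAt`, so
that it makes sense for every set `S`. -/
def HasSpacelikeTangentAt (S : Set E3) (q : E3) : Prop :=
  ∃ T : Submodule ℝ E3, PosDefOn minkForm T ∧ tangentConeAt ℝ S q ⊆ T

theorem IsChartAt.tangentConeAt_subset_tangentPlane {S : Set E3} {p : E3} {f : E2 → E3}
    {U : Set E2} (h : IsChartAt S p f U) {u : E2} (hu : u ∈ U) :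
    tangentConeAt ℝ S (f u) ⊆ TangentPlane f u := by
  obtain ⟨hU, hf, hinj, -, ⟨W, hW, hWS⟩, φ, hφ⟩ := h
  have hderiv : HasFDerivWithinAt f (fderiv ℝ f u) U u :=
    ((hf.contDiffAt (hU.mem_nhds hu)).differentiableAt (by simp)).hasFDerivAt.hasFDerivWithinAt
  have hclosed : IsClosedEmbedding (fderiv ℝ f u) :=
    LinearMap.isClosedEmbedding_of_injective (LinearMap.ker_eq_bot.2 (hinj u hu))
  have hind : IsInducing (U.domRestrict f) := by
    rw [show U.domRestrict f = Subtype.val ∘ φ from funext fun x => (hφ x).symm]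
    exact IsInducing.subtypeVal.comp φ.isInducing
  have hlocal : 𝓝[S] (f u) ≤ 𝓝[f '' U] (f u) := by
    have huW : f u ∈ W := (hWS ▸ Set.mem_image_of_mem f hu : f u ∈ W ∩ S).1
    rw [hWS, Set.inter_comm, nhdsWithin_inter_of_mem' (mem_nhdsWithin_of_mem_nhds
      (hW.mem_nhds huW))]
  exact (tangentConeAt_mono_nhds hlocal).trans
    (tangentConeAt_image_subset_range hu hderiv hclosed hind)

theorem IsSpacelikeSurface.hasSpacelikeTangentAt {S : Set E3} (hS : IsSpacelikeSurface S) {q : E3}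
    (hq : q ∈ S) : HasSpacelikeTangentAt S q := by
  obtain ⟨f, U, hchart, hpos⟩ := hS q hq
  obtain ⟨u, hu, rfl⟩ := hchart.2.2.2.1
  exact ⟨TangentPlane f u, (hpos u hu rfl).2, hchart.tangentConeAt_subset_tangentPlane hu⟩

theorem isSpacelikePlane_mk' (p : E3) {W : Submodule ℝ E3} (hdim : finrank ℝ W = 2)
    (hW : PosDefOn minkForm W) : IsSpacelikePlane (AffineSubspace.mk' p W) := by
  rw [IsSpacelikePlane, IsPlane, AffineSubspace.direction_mk']
  exact ⟨hdim, hW⟩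

theorem PropertyPStar.exists_center {S : Set E3} (hP : PropertyPStar S) {W : Submodule ℝ E3}
    (hdim : finrank ℝ W = 2) (hW : PosDefOn minkForm W) {p u : E3} (hu : u ∈ W)
    (hadd : p + u ∈ S) (hsub : p - u ∈ S) :
    ∃ c ∈ W, minkForm c u = 0 ∧
      ∀ w ∈ W, p + w ∈ S ↔ minkForm (w - c) (w - c) = minkForm (u - c) (u - c) := by
  have hmem : ∀ w, p + w ∈ AffineSubspace.mk' p W ↔ w ∈ W := fun w => by
    rw [AffineSubspace.mem_mk', vsub_eq_sub, add_sub_cancel_left]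
  obtain ⟨c, ρ, hc, -, hcirc⟩ := hP _ (isSpacelikePlane_mk' p hdim hW) ⟨_, (hmem u).2 hu, hadd⟩
  obtain ⟨c, rfl⟩ : ∃ d, c = p + d := ⟨c - p, (add_sub_cancel p c).symm⟩
  have hiff : ∀ w ∈ W, p + w ∈ S ↔ minkForm (w - c) (w - c) = ρ ^ 2 := fun w hw => by
    simpa only [Set.mem_inter_iff, SetLike.mem_coe, hmem, hw, true_and, Set.mem_ofPred_eq,
      add_sub_add_left_eq_sub, minkForm_apply] using Set.ext_iff.1 hcirc (p + w)
  have hu_eq := (hiff u hu).1 hadd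
  have hneg_eq := (hiff (-u) (W.neg_mem hu)).1 (by rwa [← sub_eq_add_neg])
  refine ⟨c, (hmem c).1 hc, ?_, fun w hw => by rw [hiff w hw, hu_eq]⟩
  rw [apply_sub_sub_self isSymm_minkForm] at hu_eq hneg_eq
  simp only [map_neg, LinearMap.neg_apply] at hneg_eq
  linarith

theorem PropertyPStar.sub_mem_of_add_mem {S : Set E3} (hP : PropertyPStar S) {W : Submodule ℝ E3}
    (hdim : finrank ℝ W = 2) (hW : PosDefOn minkForm W) {p u w : E3} (hu : u ∈ W) (hw : w ∈ W)
    (huw : minkForm w w = minkForm u u) (hadd : p + u ∈ S) (hsub : p - u ∈ S) (hwS : p + w ∈ S) :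
    p - w ∈ S := by
  obtain ⟨c, -, hcu, hiff⟩ := hP.exists_center hdim hW hu hadd hsub
  have hw_eq := (hiff w hw).1 hwS
  rw [sub_eq_add_neg, hiff (-w) (W.neg_mem hw)]
  simp only [apply_sub_sub_self isSymm_minkForm, map_neg, LinearMap.neg_apply, hcu, huw] at hw_eq ⊢
  linarith

/-- A Minkowski-orthogonal frame `u`, `v`, `n` with `n` timelike, all three vectors being scaled to
squared length `± k`; with `k` the squared radius of a circle, the formulas become those of the unit
circle. -/
structure IsLorentzFrame (k : ℝ) (u v n : E3) : Prop where
  pos : 0 < k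
  uu : minkForm u u = k
  vv : minkForm v v = k
  nn : minkForm n n = -k
  uv : minkForm u v = 0
  un : minkForm u n = 0
  vn : minkForm v n = 0

theorem exists_isLorentzFrame {V M : Submodule ℝ E3} (hdim : finrank ℝ V = 2)
    (hV : PosDefOn minkForm V) (hM : M ≠ ⊥) (horth : ∀ n ∈ M, ∀ v ∈ V, minkForm n v = 0) {u : E3}
    (hu : u ∈ V) (hu0 : u ≠ 0) :
    ∃ v ∈ V, ∃ n ∈ M, IsLorentzFrame (minkForm u u) u v n := by
  have hk := hV u hu hu0
  obtain ⟨v, hv, hv0, huv⟩ := exists_mem_ne_zero_apply_eq_zero (W := V) (by omega) (minkForm u)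
  obtain ⟨t, -, htv⟩ := exists_pos_smul_apply_self_eq (div_pos hk (hV v hv hv0))
  obtain ⟨n, hn, hn0⟩ := Submodule.exists_mem_ne_zero_of_ne_bot hM
  have hnn : minkForm n n < 0 :=
    hV.apply_self_neg_of_orthogonal isSymm_minkForm (by simp [hdim])
      exists_minkForm_apply_self_neg hn0 (horth n hn)
  obtain ⟨s, -, hsn⟩ :=
    exists_pos_smul_apply_self_eq (div_pos_of_neg_of_neg (neg_neg_of_pos hk) hnn)
  have horth' : ∀ w ∈ V, minkForm w (s • n) = 0 := fun w hw => by
    rw [map_smul, isSymm_minkForm.eq, horth n hn w hw, smul_zero]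
  exact ⟨t • v, V.smul_mem t hv, s • n, M.smul_mem s hn,
    { pos := hk, uu := rfl, vv := htv, nn := hsn, uv := by rw [map_smul, huv, smul_zero],
      un := horth' u hu, vn := horth' _ (V.smul_mem t hv) }⟩

namespace IsLorentzFrame

variable {k : ℝ} {u v n : E3} {S : Set E3} {T : Submodule ℝ E3} {p : E3}

theorem minkForm_add_smul_self (h : IsLorentzFrame k u v n) (a : ℝ) :
    minkForm (v + a • n) (v + a • n) = k * (1 - a ^ 2) := by
  have hval := apply_smul_add_smul_self isSymm_minkForm h.vn 1 a
  rw [one_smul, h.vv, h.nn] at hval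
  linarith

theorem minkForm_left_add_smul (h : IsLorentzFrame k u v n) (a : ℝ) :
    minkForm u (v + a • n) = 0 := by
  rw [map_add, map_smul, h.uv, h.un, smul_zero, add_zero]

theorem posDefOn_span (h : IsLorentzFrame k u v n) {a : ℝ} (ha : a ^ 2 < 1) :
    PosDefOn minkForm (Submodule.span ℝ {u, v + a • n}) :=
  posDefOn_span_pair isSymm_minkForm (h.uu ▸ h.pos)
    (h.minkForm_add_smul_self a ▸ mul_pos h.pos (sub_pos.2 ha)) (h.minkForm_left_add_smul a)

theorem finrank_span (h : IsLorentzFrame k u v n) {a : ℝ} (ha : a ^ 2 < 1) :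
    finrank ℝ (Submodule.span ℝ {u, v + a • n}) = 2 :=
  finrank_span_pair_eq_two isSymm_minkForm (h.uu ▸ h.pos.ne')
    (h.minkForm_add_smul_self a ▸ (mul_pos h.pos (sub_pos.2 ha)).ne') (h.minkForm_left_add_smul a)

theorem exists_section_slope (h : IsLorentzFrame k u v n) (hP : PropertyPStar S)
    (hadd : p + u ∈ S) (hsub : p - u ∈ S) (hT : tangentConeAt ℝ S (p + u) ⊆ T) {a : ℝ}
    (ha : a ^ 2 < 1) :
    ∃ b : ℝ, b • u + (v + a • n) ∈ T ∧ ∀ x y : ℝ,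
      p + (x • u + y • (v + a • n)) ∈ S ↔ x ^ 2 + (1 - a ^ 2) * y ^ 2 = 2 * b * y + 1 := by
  have hW := h.posDefOn_span ha
  have hww := h.minkForm_add_smul_self a
  have huw := h.minkForm_left_add_smul a
  set w := v + a • n
  set W := Submodule.span ℝ {u, w}
  have hmem : ∀ x y : ℝ, x • u + y • w ∈ W := fun x y => Submodule.mem_span_pair.2 ⟨x, y, rfl⟩
  have hu : u ∈ W := Submodule.subset_span (by simp)
  obtain ⟨c, hc, hcu, hiff⟩ := hP.exists_center (h.finrank_span ha) hW hu hadd hsub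
  have hcw : minkForm c w = k * (minkForm c w / k) := (mul_div_cancel₀ _ h.pos.ne').symm
  set b := minkForm c w / k
  refine ⟨b, ?_, fun x y => ?_⟩
  · have huc : u ≠ c := by
      rintro rfl
      exact h.pos.ne' (h.uu ▸ hcu)
    refine mem_of_tangentConeAt_subset_of_sphere_subset isSymm_minkForm hW hc hu huc
      (fun x hx => (hiff x hx).2) hT (by simpa using hmem b 1) ?_
    simp only [map_add, map_smul, map_sub, LinearMap.sub_apply, h.uu, huw, hcu, smul_eq_mul, hcw]
    ring
  · have hdiff : minkForm (x • u + y • w - c) (x • u + y • w - c)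
        - minkForm (u - c) (u - c) = k * (x ^ 2 + (1 - a ^ 2) * y ^ 2 - (2 * b * y + 1)) := by
      rw [apply_sub_sub_self isSymm_minkForm, apply_sub_sub_self isSymm_minkForm,
        apply_smul_add_smul_self isSymm_minkForm huw, h.uu, hww, map_add, map_smul, map_smul, hcu,
        hcw, smul_eq_mul, smul_eq_mul]
      ring
    rw [hiff _ (hmem x y), ← sub_eq_zero, hdiff, mul_eq_zero, or_iff_right h.pos.ne', sub_eq_zero]

theorem exists_section_slope_eq_mul (h : IsLorentzFrame k u v n) (hP : PropertyPStar S)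
    (hadd : p + u ∈ S) (hsub : p - u ∈ S) (hv : p + v ∈ S)
    (hS : HasSpacelikeTangentAt S (p + u)) :
    ∃ m : ℝ, 1 < m ^ 2 ∧ ∀ a : ℝ, a ^ 2 < 1 → ∀ x y : ℝ,
      x ^ 2 + (1 - a ^ 2) * y ^ 2 = 2 * (m * a) * y + 1 → p + (x • u + y • (v + a • n)) ∈ S := by
  obtain ⟨T, hTpos, hT⟩ := hS
  have hslope := fun a ha => h.exists_section_slope hP hadd hsub hT (a := a) ha
  have hvT : v ∈ T := by
    obtain ⟨b, hbT, hb⟩ := hslope 0 (by norm_num)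
    have hb0 : b = 0 := by linarith [(hb 0 1).1 (by simpa using hv)]
    simpa [hb0] using hbT
  have hsubT : ∀ {a b : ℝ}, b • u + (v + a • n) ∈ T → b • u + a • n ∈ T := fun {a b} hb => by
    convert T.sub_mem hb hvT using 1
    abel
  have hn0 : n ≠ 0 := by
    rintro rfl
    exact h.pos.ne' (by simpa using h.nn)
  have hnT : n ∉ T := fun hn => by linarith [hTpos n hn hn0, h.nn, h.pos]
  obtain ⟨b₀, hb₀T, -⟩ := hslope (1 / 2) (by norm_num)
  refine ⟨2 * b₀, ?_, fun a ha x y hxy => ?_⟩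
  · have hne : b₀ • u + (1 / 2 : ℝ) • n ≠ 0 := fun h0 => by
      simpa [isSymm_minkForm.eq n u, h.un, h.nn, h.pos.ne'] using congrArg (minkForm n) h0
    have hpos := hTpos _ (hsubT hb₀T) hne
    rw [apply_smul_add_smul_self isSymm_minkForm h.un, h.uu, h.nn] at hpos
    nlinarith [h.pos]
  · obtain ⟨b, hbT, hb⟩ := hslope a ha
    have hba : b = 2 * b₀ * a := by
      linarith [mul_eq_mul_of_smul_add_smul_mem hnT (hsubT hbT) (hsubT hb₀T)]
    rw [hb, hba, hxy]

end IsLorentzFrame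

theorem exists_sq_lt_one_quadratic_root {m : ℝ} (hm : 1 < m ^ 2) :
    ∃ s : ℝ, s ^ 2 < 1 ∧ s ^ 2 + 2 * m * s + 1 = 0 := by
  have hd := Real.sq_sqrt (sub_nonneg.2 hm.le)
  have hd0 := Real.sqrt_pos.2 (sub_pos.2 hm)
  set d := √(m ^ 2 - 1)
  rcases lt_abs.1 ((one_lt_sq_iff_one_lt_abs m).1 hm) with hm1 | hm1
  · exact ⟨-m + d, by nlinarith, by linarith⟩
  · exact ⟨-m - d, by nlinarith, by linarith⟩

theorem IsLorentzFrame.exists_add_smul_mem {k : ℝ} {u v n : E3} {S : Set E3} {p : E3}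
    (h : IsLorentzFrame k u v n) (hP : PropertyPStar S) (hadd : p + u ∈ S) (hsub : p - u ∈ S)
    (hv : p + v ∈ S) (hS : HasSpacelikeTangentAt S (p + u)) : ∃ s : ℝ, p + s • n ∈ S := by
  obtain ⟨m, hm, hmem⟩ := h.exists_section_slope_eq_mul hP hadd hsub hv hS
  obtain ⟨s, hs, hroot⟩ := exists_sq_lt_one_quadratic_root hm
  have hs' : (-s) ^ 2 < 1 := by rwa [neg_sq]
  set x := √(1 - s ^ 2) / 2
  have hx : x ^ 2 = (1 - s ^ 2) / 4 := by
    rw [div_pow, Real.sq_sqrt (sub_nonneg.2 hs.le)]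
    norm_num
  set W := Submodule.span ℝ {u, v + (-s) • n}
  have hu : x • u ∈ W := W.smul_mem x (Submodule.subset_span (by simp))
  have hw : (1 / 2 : ℝ) • (v + (-s) • n) ∈ W := W.smul_mem _ (Submodule.subset_span (by simp))
  have hcirc : ∀ ε : ℝ, ε ^ 2 = 1 → p + ((ε * x) • u + (1 / 2 : ℝ) • (v + s • n)) ∈ S :=
    fun ε hε => hmem s hs _ _ (by rw [mul_pow, hε, hx]; linarith)
  have hlen : minkForm ((1 / 2 : ℝ) • (v + (-s) • n)) ((1 / 2 : ℝ) • (v + (-s) • n)) =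
      minkForm (x • u) (x • u) := by
    have hww := h.minkForm_add_smul_self (-s)
    simp only [map_smul, LinearMap.smul_apply, smul_eq_mul] at hww ⊢
    rw [hww, h.uu]
    linear_combination -k * hx
  -- `hroot` puts two antipodes of the circle with diameter from `p + v` to `p + s • n` on `S`.
  have hthales := hP.sub_mem_of_add_mem (p := p + (1 / 2 : ℝ) • (v + s • n)) (h.finrank_span hs')
    (h.posDefOn_span hs') hu hw hlen (by convert hcirc 1 (by norm_num) using 1; module)
    (by convert hcirc (-1) (by norm_num) using 1; module) (by convert hv using 1; module)
  exact ⟨s, by convert hthales using 1; module⟩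

theorem IsMCircleIn.add_mem {Pl : AffineSubspace ℝ E3} {c w : E3} {r : ℝ} {C : Set E3}
    (hC : IsMCircleIn Pl c r C) (hw : w ∈ Pl.direction) (hwr : minkForm w w = r ^ 2) :
    c + w ∈ C := by
  rw [hC.2.2]
  refine ⟨?_, by rwa [add_sub_cancel_left, ← minkForm_apply]⟩
  simpa [add_comm] using AffineSubspace.vadd_mem_of_mem_direction hw hC.1

theorem IsMCircleIn.nonempty {Pl : AffineSubspace ℝ E3} {c : E3} {r : ℝ} {C : Set E3}
    (hC : IsMCircleIn Pl c r C) (hPl : IsSpacelikePlane Pl) (hr : 0 < r) : C.Nonempty := by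
  obtain ⟨w, hw, hw0⟩ := Submodule.exists_mem_ne_zero_of_ne_bot
    (Submodule.one_le_finrank_iff.1 (one_le_two.trans_eq hPl.1.symm))
  obtain ⟨t, -, ht⟩ := exists_pos_smul_apply_self_eq (B := minkForm)
    (div_pos (pow_pos hr 2) (hPl.2 w hw hw0))
  exact ⟨_, hC.add_mem (Pl.direction.smul_mem t hw) ht⟩

end Minkowski

theorem axis_meets_surface_general {S : Set E3} (hP : PropertyPStar S)
    {Pl₀ : AffineSubspace ℝ E3} (hPl₀ : IsSpacelikePlane Pl₀) {P : E3} {r : ℝ} (hr : 0 < r)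
    (hC : IsMCircleIn Pl₀ P r ((Pl₀ : Set E3) ∩ S))
    {q : E3} (hq : q ∈ (Pl₀ : Set E3) ∩ S) (htan : HasSpacelikeTangentAt S q)
    {L : AffineSubspace ℝ E3} (hL : IsLine L) (hPL : P ∈ L)
    (horth : ∀ v ∈ L.direction, ∀ w ∈ Pl₀.direction, mink v w = 0) :
    ((L : Set E3) ∩ S).Nonempty := by
  obtain ⟨u, rfl⟩ : ∃ u, q = P + u := ⟨q - P, (add_sub_cancel P q).symm⟩
  have hu : u ∈ Pl₀.direction := by
    simpa using AffineSubspace.vsub_mem_direction hq.1 hC.1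
  have huu : minkForm u u = r ^ 2 := by
    have hqC := hq
    rw [hC.2.2] at hqC
    simpa only [add_sub_cancel_left, minkForm_apply] using hqC.2
  have hu0 : u ≠ 0 := by
    rintro rfl
    exact (pow_pos hr 2).ne (by simpa using huu)
  have hLbot : L.direction ≠ ⊥ := Submodule.one_le_finrank_iff.1 hL.ge
  obtain ⟨v, hv, n, hn, hframe⟩ := exists_isLorentzFrame hPl₀.1 hPl₀.2 hLbot horth hu hu0
  have hsub : P - u ∈ S := by
    simpa [sub_eq_add_neg] using (hC.add_mem (Pl₀.direction.neg_mem hu) (by simpa using huu)).2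
  have hvS : P + v ∈ S := (hC.add_mem hv (hframe.vv.trans huu)).2
  obtain ⟨s, hs⟩ := hframe.exists_add_smul_mem hP hq.2 hsub hvS htan
  refine ⟨P + s • n, ?_, hs⟩
  simpa [add_comm] using AffineSubspace.vadd_mem_of_mem_direction (L.direction.smul_mem s hn) hPL

/-- For a nonempty connected spacelike regular surface `S` with property 𝒫*,
if a spacelike plane `Pl₀` meets `S` in a non-degenerate circle with center `P`, then the
line through `P` Minkowski-orthogonal to `Pl₀` meets `S`. -/
theorem axis_meets_surface (S : Set E3) (hne : S.Nonempty) (hconn : IsConnected S)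
    (hreg : IsSpacelikeSurface S) (hP : PropertyPStar S)
    (Pl₀ : AffineSubspace ℝ E3) (hPl₀ : IsSpacelikePlane Pl₀)
    (P : E3) (r : ℝ) (hr : 0 < r)
    (hC : IsMCircleIn Pl₀ P r ((Pl₀ : Set E3) ∩ S))
    (L : AffineSubspace ℝ E3) (hL : IsLine L) (hPL : P ∈ L)
    (horth : ∀ v ∈ L.direction, ∀ w ∈ Pl₀.direction, mink v w = 0) :
    ((L : Set E3) ∩ S).Nonempty := by
  obtain ⟨q, hq⟩ := hC.nonempty hPl₀ hr
  exact axis_meets_surface_general hP hPl₀ hr hC hq (hreg.hasSpacelikeTangentAt hq.2) hL hPL horth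
end
end

section
/- Let S be a nonempty connected spacelike regular surface in Minkowski space 𝕃³ satisfying property 𝒫*. Then S is a closed subset of ℝ³. -/
noncomputable section

open Module
open scoped RealInnerProductSpace

/-!
Let `q` be a limit point of `S` that is not in `S`. If some `s ∈ S` were spacelike separated from
`q`, choose a spacelike plane through `q` and `s` that is transversal to `S` at `s`. It contains
three points of `S` near `s`, and nearby parallel planes carry nearby triples of `S` together with
points of `S` tending to `q`. All these quadruples are concyclic by property 𝒫*, hence so is the
limit quadruple, and `q ∈ S`. So `S` lies in the causal cone of each of its missing limit points.

Now fix `s ∈ S`. Causality and connectedness make the part of `closure S` between the heights of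
`q` and `s` compact and contained in `S ∪ {q}`. On it, maximize the Lorentzian square distance to
an apex `a` near `q` at an intermediate height. Some point of `S` at the height of `a` makes the
maximum positive, while the distance is nonpositive at `q` and at the height of `s`, so that the
maximum is attained at an interior point of `S`. There the vector from `a` is normal to `S`, hence
timelike, which contradicts positivity.
-/

open Filter Topology

/-! ### The Minkowski form -/

/-- The Minkowski form `mink` as a continuous bilinear map. -/
def minkBilin : E3 →L[ℝ] E3 →L[ℝ] ℝ :=
  (LinearMap.mk₂ ℝ mink
    (fun x y z ↦ by simp only [mink, PiLp.add_apply]; ring)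
    (fun c x y ↦ by simp only [mink, PiLp.smul_apply, smul_eq_mul]; ring)
    (fun x y z ↦ by simp only [mink, PiLp.add_apply]; ring)
    (fun c x y ↦ by simp only [mink, PiLp.smul_apply, smul_eq_mul]; ring)).toContinuousBilinearMap

@[simp]
lemma minkBilin_apply (x y : E3) : minkBilin x y = mink x y := rfl

lemma mink_comm (x y : E3) : mink x y = mink y x := by
  simp only [mink]; ring

lemma mink_add_left (x y z : E3) : mink (x + y) z = mink x z + mink y z := by
  simp only [← minkBilin_apply, map_add, add_apply]

lemma mink_add_right (x y z : E3) : mink x (y + z) = mink x y + mink x z := by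
  simp only [← minkBilin_apply, map_add]

lemma mink_sub_right (x y z : E3) : mink x (y - z) = mink x y - mink x z := by
  simp only [← minkBilin_apply, map_sub]

lemma mink_smul_left (c : ℝ) (x y : E3) : mink (c • x) y = c * mink x y := by
  simp only [← minkBilin_apply, map_smul, smul_apply, smul_eq_mul]

lemma mink_smul_right (c : ℝ) (x y : E3) : mink x (c • y) = c * mink x y := by
  simp only [← minkBilin_apply, map_smul, smul_eq_mul]

lemma mink_sub_self (x c : E3) : mink (x - c) (x - c) = mink x x - 2 * mink c x + mink c c := by
  simp only [mink, PiLp.sub_apply]; ring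

@[fun_prop]
lemma continuous_mink {X : Type*} [TopologicalSpace X] {f g : X → E3} (hf : Continuous f)
    (hg : Continuous g) : Continuous fun x ↦ mink (f x) (g x) :=
  (minkBilin.continuous.comp hf).clm_apply hg

lemma hasFDerivAt_mink_sub_self (a x : E3) :
    HasFDerivAt (fun y ↦ mink (y - a) (y - a)) ((2 : ℝ) • minkBilin (x - a)) x := by
  have hsub : HasFDerivAt (fun y : E3 ↦ y - a) (ContinuousLinearMap.id ℝ E3) x :=
    (hasFDerivAt_id x).sub_const a
  refine (minkBilin.hasFDerivAt_of_bilinear hsub hsub).congr_fderiv ?_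
  ext v
  simp [mink_comm v, two_mul]

lemma mink_self_pos_of_apply_two_eq_zero {v : E3} (hv2 : v 2 = 0) (hv : v ≠ 0) :
    0 < mink v v := by
  contrapose! hv
  have hsum : v 0 ^ 2 + v 1 ^ 2 ≤ 0 := by simp only [mink, hv2] at hv; linarith
  have hv0 : v 0 = 0 := by nlinarith [sq_nonneg (v 0), sq_nonneg (v 1)]
  have hv1 : v 1 = 0 := by nlinarith [sq_nonneg (v 0), sq_nonneg (v 1)]
  ext i
  fin_cases i
  exacts [hv0, hv1, hv2]

lemma eq_of_mink_sub_self_nonpos {x y : E3} (h : mink (x - y) (x - y) ≤ 0) (h2 : x 2 = y 2) :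
    x = y := by
  by_contra hne
  exact h.not_gt (mink_self_pos_of_apply_two_eq_zero (sub_eq_zero.2 h2) (sub_ne_zero.2 hne))

lemma mink_self_pos_of_orthogonal_timelike {n v : E3} (hn : mink n n < 0) (hnv : mink n v = 0)
    (hv : v ≠ 0) : 0 < mink v v := by
  by_cases hv2 : v 2 = 0
  · exact mink_self_pos_of_apply_two_eq_zero hv2 hv
  simp only [mink] at *
  have cauchy : (n 2 * v 2) ^ 2 ≤ (n 0 ^ 2 + n 1 ^ 2) * (v 0 ^ 2 + v 1 ^ 2) := by
    rw [← sub_eq_zero.1 hnv]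
    nlinarith [sq_nonneg (n 0 * v 1 - n 1 * v 0)]
  have hv2' : 0 < v 2 ^ 2 := by positivity
  nlinarith [sq_nonneg (n 0), sq_nonneg (n 1)]

lemma eq_zero_of_orthogonal_timelike {n v : E3} (hn : mink n n < 0) (hnv : mink n v = 0)
    (h0 : v 0 = 0) (h1 : v 1 = 0) : v = 0 := by
  by_contra hv
  have hpos := mink_self_pos_of_orthogonal_timelike hn hnv hv
  simp only [mink, h0, h1] at hpos
  nlinarith [sq_nonneg (v 2)]

/-- Otherwise the form would be positive semidefinite on `T ⊕ ℝ w = ℝ³`. -/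
lemma mink_self_neg_of_orthogonal_spacelike {T : Submodule ℝ E3} {w : E3}
    (hdim : finrank ℝ T = 2) (hpos : ∀ v ∈ T, v ≠ 0 → 0 < mink v v)
    (horth : ∀ v ∈ T, mink w v = 0) (hw : w ≠ 0) : mink w w < 0 := by
  by_contra! hww
  have hwT : w ∉ T := fun hmem ↦ (hpos w hmem hw).ne' (horth w hmem)
  have htop : T ⊔ Submodule.span ℝ {w} = ⊤ := by
    refine Submodule.eq_top_of_finrank_eq (le_antisymm (Submodule.finrank_le _) ?_)
    have hlt : T < T ⊔ Submodule.span ℝ {w} :=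
      left_lt_sup.2 fun hle ↦ hwT (hle (Submodule.mem_span_singleton_self w))
    have hfinrank := Submodule.finrank_lt_finrank_of_lt hlt
    rw [hdim] at hfinrank
    rwa [finrank_euclideanSpace, Fintype.card_fin]
  obtain ⟨v, hv, y, hy, hvy⟩ := Submodule.mem_sup.1
    (htop ▸ Submodule.mem_top : EuclideanSpace.single (2 : Fin 3) (1 : ℝ) ∈ T ⊔ _)
  obtain ⟨c, rfl⟩ := Submodule.mem_span_singleton.1 hy
  have hvv : 0 ≤ mink v v := by
    rcases eq_or_ne v 0 with rfl | hv0
    · simp [mink]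
    · exact (hpos v hv hv0).le
  have hexpand : mink (v + c • w) (v + c • w) = mink v v + c ^ 2 * mink w w := by
    simp only [mink_add_left, mink_add_right, mink_smul_left, mink_smul_right, mink_comm v w,
      horth v hv]
    ring
  have hneg : mink (v + c • w) (v + c • w) = -1 := by rw [hvy]; simp [mink]
  nlinarith [mul_nonneg (sq_nonneg c) hww]

lemma exists_timelike_spacelike_orthogonal {w : E3} (hw : 0 < mink w w) :
    ∃ n m : E3, mink n n < 0 ∧ 0 < mink m m ∧ mink n w = 0 ∧ mink m w = 0 := by
  have hN : 0 < w 0 ^ 2 + w 1 ^ 2 := by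
    simp only [mink] at hw
    nlinarith [sq_nonneg (w 2)]
  refine ⟨!₂[w 2 * w 0, w 2 * w 1, w 0 ^ 2 + w 1 ^ 2], !₂[-w 1, w 0, 0], ?_, ?_, ?_, ?_⟩
  · calc mink _ _ = -((w 0 ^ 2 + w 1 ^ 2) * mink w w) := by simp only [mink, Matrix.cons_val]; ring
      _ < 0 := neg_lt_zero.2 (mul_pos hN hw)
  · calc 0 < w 0 ^ 2 + w 1 ^ 2 := hN
      _ = mink _ _ := by simp only [mink, Matrix.cons_val]; ring
  all_goals simp only [mink, Matrix.cons_val]; ring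

lemma exists_timelike_orthogonal_and_transversal {T : Submodule ℝ E3} {w : E3}
    (hdim : finrank ℝ T = 2) (hpos : ∀ v ∈ T, v ≠ 0 → 0 < mink v v) (hw : 0 < mink w w) :
    ∃ n, mink n n < 0 ∧ mink n w = 0 ∧ ∃ v ∈ T, mink n v ≠ 0 := by
  obtain ⟨n, m, hn, hm, hnw, hmw⟩ := exists_timelike_spacelike_orthogonal hw
  have hcont : Continuous fun ε : ℝ ↦ mink (n + ε • m) (n + ε • m) := by fun_prop
  have htimelike : ∀ᶠ ε in 𝓝 (0 : ℝ), mink (n + ε • m) (n + ε • m) < 0 :=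
    hcont.continuousAt.eventually_lt_const (by simpa only [zero_smul, add_zero] using hn)
  obtain ⟨ε, hε, hε0⟩ := ((eventually_nhdsWithin_of_eventually_nhds htimelike).and
    (eventually_mem_nhdsWithin : ∀ᶠ ε in 𝓝[≠] (0 : ℝ), ε ∈ _)).exists
  by_contra! hcontra
  have horth_n := hcontra n hn hnw
  have horth_sum := hcontra (n + ε • m) hε (by simp [mink_add_left, mink_smul_left, hnw, hmw])
  have horth_m (v : E3) (hv : v ∈ T) : mink m v = 0 := by
    have h := horth_sum v hv
    rw [mink_add_left, mink_smul_left, horth_n v hv, zero_add] at h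
    exact (mul_eq_zero.1 h).resolve_left hε0
  have hm0 : m ≠ 0 := by rintro rfl; simp [mink] at hm
  exact hm.not_gt (mink_self_neg_of_orthogonal_spacelike hdim hpos horth_m hm0)

lemma isCompact_setOf_mink_sub_self_nonpos (q : E3) (a b : ℝ) :
    IsCompact {x : E3 | mink (x - q) (x - q) ≤ 0 ∧ x 2 ∈ Set.Icc a b} := by
  have hclosed : IsClosed {x : E3 | mink (x - q) (x - q) ≤ 0 ∧ x 2 ∈ Set.Icc a b} :=
    (isClosed_le (by fun_prop : Continuous fun x ↦ mink (x - q) (x - q)) continuous_const).inter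
      (isClosed_Icc.preimage (by fun_prop : Continuous fun x : E3 ↦ x 2))
  refine (isCompact_closedBall q (2 * (|a - q 2| + |b - q 2|))).of_isClosed_subset hclosed ?_
  rintro x ⟨hx, hxa, hxb⟩
  have hnorm : ‖x - q‖ ^ 2 = mink (x - q) (x - q) + 2 * (x 2 - q 2) ^ 2 := by
    simp only [EuclideanSpace.real_norm_sq_eq, Fin.sum_univ_three, mink, PiLp.sub_apply]
    ring
  have hheight : |x 2 - q 2| ≤ |a - q 2| + |b - q 2| := by
    refine (abs_le_max_abs_abs (sub_le_sub_right hxa _) (sub_le_sub_right hxb _)).trans ?_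
    exact max_le_add_of_nonneg (abs_nonneg _) (abs_nonneg _)
  rw [mem_closedBall_iff_norm]
  refine abs_le_of_sq_le_sq' ?_ (by positivity) |>.2
  nlinarith [sq_abs (x 2 - q 2), abs_nonneg (x 2 - q 2)]

/-! ### Level sets of submersions -/

section Submersion

variable {E : Type*} [NormedAddCommGroup E] [NormedSpace ℝ E]

lemma isPreconnected_ball_diff_center (hE : 1 < Module.rank ℝ E) (u : E) {r : ℝ} (hr : 0 < r) :
    IsPreconnected (Metric.ball u r \ {u}) := by
  let e := OpenPartialHomeomorph.univBall u r
  have himage : e '' {0}ᶜ = Metric.ball u r \ {u} := by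
    have hrange : e '' Set.univ = Metric.ball u r := by
      rw [← OpenPartialHomeomorph.univBall_source u r, e.image_source_eq_target,
        OpenPartialHomeomorph.univBall_target u hr]
    have hinj : Set.InjOn e Set.univ := by
      simpa only [e, OpenPartialHomeomorph.univBall_source] using e.injOn
    rw [Set.compl_eq_univ_sdiff, hinj.image_sdiff_subset (Set.subset_univ _), hrange,
      Set.image_singleton, OpenPartialHomeomorph.univBall_apply_zero]
  rw [← himage]
  exact (isConnected_compl_singleton_of_one_lt_rank hE 0).isPreconnected.image _
    (OpenPartialHomeomorph.continuous_univBall u r).continuousOn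

lemma frequently_nhdsNE_eq_of_map_nhds_eq (hE : 1 < Module.rank ℝ E) {g : E → ℝ} {u : E}
    (hcont : ∀ᶠ v in 𝓝 u, ContinuousAt g v) (hopen : map g (𝓝 u) = 𝓝 (g u)) :
    ∃ᶠ v in 𝓝[≠] u, g v = g u := by
  rw [(nhdsWithin_hasBasis Metric.nhds_basis_ball _).frequently_iff]
  intro ε hε
  obtain ⟨δ, hδ, hgδ⟩ := Metric.eventually_nhds_iff_ball.1 hcont
  have hr : 0 < min ε δ := lt_min hε hδ
  have himage : ∀ᶠ t in 𝓝 (g u), t ∈ g '' Metric.ball u (min ε δ) :=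
    hopen ▸ image_mem_map (Metric.ball_mem_nhds u hr)
  obtain ⟨_, hlow, a, ha, rfl⟩ := himage.exists_lt
  obtain ⟨_, hhigh, b, hb, rfl⟩ := himage.exists_gt
  have hcontOn : ContinuousOn g (Metric.ball u (min ε δ) \ {u}) := fun v hv ↦
    (hgδ v (Metric.ball_subset_ball (min_le_right _ _) hv.1)).continuousWithinAt
  obtain ⟨v, ⟨hv, hvu⟩, hgv⟩ :=
    (isPreconnected_ball_diff_center hE u hr).intermediate_value
      ⟨ha, ne_of_apply_ne g hlow.ne⟩ ⟨hb, ne_of_apply_ne g hhigh.ne'⟩ hcontOn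
      ⟨hlow.le, hhigh.le⟩
  exact ⟨v, ⟨Metric.ball_subset_ball (min_le_left _ _) hv, hvu⟩, hgv⟩

lemma eventually_map_nhds_eq_of_fderiv_ne_zero [CompleteSpace E] {g : E → ℝ} {u : E}
    (hg : ContDiffAt ℝ 1 g u) (hne : fderiv ℝ g u ≠ 0) :
    ∀ᶠ v in 𝓝 u, map g (𝓝 v) = 𝓝 (g v) := by
  have hcont : ContinuousAt (fderiv ℝ g) u := hg.continuousAt_fderiv one_ne_zero
  filter_upwards [hcont.eventually_ne hne, hg.eventually (by simp)] with v hv hgv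
  refine (hgv.hasStrictFDerivAt one_ne_zero).map_nhds_eq_of_surj ?_
  exact LinearMap.range_eq_top.2 <|
    LinearMap.surjective fun h ↦ hv (ContinuousLinearMap.coe_injective h)

end Submersion

lemma mem_closure_setOf_level_eq {ι X Y : Type*} [Finite ι] [TopologicalSpace X]
    [TopologicalSpace Y] {S : Set X} {ℓ : X → Y} {x : ι → X} {q : X} (hℓ : ContinuousAt ℓ q)
    (hq : q ∈ closure S) (hx : ∀ i, 𝓝 (ℓ q) ≤ map ℓ (𝓝[S] (x i))) :
    (x, q) ∈ closure {y : (ι → X) × X | (∀ i, y.1 i ∈ S ∧ ℓ (y.1 i) = ℓ y.2) ∧ y.2 ∈ S} := by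
  rw [mem_closure_iff_nhds]
  intro N hN
  rw [nhds_prod_eq, nhds_pi] at hN
  obtain ⟨A, hA, V, hV, hAV⟩ := Filter.mem_prod_iff.1 hN
  obtain ⟨I, U, hU, hUA⟩ := Filter.mem_pi'.1 hA
  have hlevel : ∀ᶠ p in 𝓝 q, ∀ i, ℓ p ∈ ℓ '' (U i ∩ S) :=
    eventually_all.2 fun i ↦ hℓ.eventually <|
      hx i <| image_mem_map <| inter_mem (mem_nhdsWithin_of_mem_nhds (hU i)) self_mem_nhdsWithin
  obtain ⟨p, hpS, hp, hpV⟩ :=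
    ((mem_closure_iff_frequently.1 hq).and_eventually (hlevel.and hV)).exists
  choose y hy hyp using hp
  exact ⟨(y, p), hAV ⟨hUA fun i _ ↦ (hy i).1, hpV⟩, fun i ↦ ⟨(hy i).2, hyp i⟩, hpS⟩

/-! ### Surfaces -/

section Chart

variable {S : Set E3} {p : E3} {f : E2 → E3} {U : Set E2} {u : E2} {ℓ : E3 →L[ℝ] ℝ}

lemma IsChartAt.map_nhds (hf : IsChartAt S p f U) (hu : u ∈ U) : map f (𝓝 u) = 𝓝[S] (f u) := by
  obtain ⟨hU, -, -, -, ⟨W, hW, hWS⟩, φ, hφ⟩ := hf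
  have hfuW : f u ∈ W := (hWS ▸ Set.mem_image_of_mem f hu : f u ∈ W ∩ S).1
  have hcomp : f ∘ ((↑) : U → E2) = ((↑) : f '' U → E3) ∘ φ := funext fun v ↦ (hφ v).symm
  calc map f (𝓝 u) = map (f ∘ ((↑) : U → E2)) (𝓝 ⟨u, hu⟩) := by
        rw [← Filter.map_map, map_nhds_subtype_coe_eq_nhds hu (hU.mem_nhds hu)]
    _ = 𝓝[f '' U] (f u) := by
        rw [hcomp, ← Filter.map_map, φ.map_nhds_eq, map_nhds_subtype_val, hφ]
    _ = 𝓝[S] (f u) := by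
        rw [hWS, Set.inter_comm,
          nhdsWithin_inter_of_mem' (mem_nhdsWithin_of_mem_nhds (hW.mem_nhds hfuW))]

lemma IsChartAt.contDiffAt (hf : IsChartAt S p f U) (hu : u ∈ U) : ContDiffAt ℝ 1 f u :=
  (hf.2.1.contDiffAt (hf.1.mem_nhds hu)).of_le (by norm_cast)

lemma IsChartAt.injOn (hf : IsChartAt S p f U) : Set.InjOn f U := by
  obtain ⟨-, -, -, -, -, φ, hφ⟩ := hf
  refine Set.injOn_iff_injective.2 fun v w hvw ↦ φ.injective (Subtype.ext ?_)
  rw [hφ, hφ]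
  exact hvw

lemma IsChartAt.eventually_map_nhdsWithin_eq (hf : IsChartAt S p f U) (hu : u ∈ U)
    (hℓ : ℓ ∘L fderiv ℝ f u ≠ 0) :
    ∀ᶠ v in 𝓝 u, map ℓ (𝓝[S] (f v)) = 𝓝 (ℓ (f v)) := by
  have hfderiv : fderiv ℝ (ℓ ∘ f) u ≠ 0 := by
    rwa [(ℓ.hasFDerivAt.comp u
      ((hf.contDiffAt hu).differentiableAt one_ne_zero).hasFDerivAt).fderiv]
  filter_upwards [hf.1.mem_nhds hu, eventually_map_nhds_eq_of_fderiv_ne_zero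
    (ℓ.contDiff.contDiffAt.comp u (hf.contDiffAt hu)) hfderiv] with v hv hmap
  rwa [← hf.map_nhds hv, Filter.map_map]

lemma IsChartAt.frequently_level_eq (hf : IsChartAt S p f U) (hu : u ∈ U)
    (hℓ : map ℓ (𝓝[S] (f u)) = 𝓝 (ℓ (f u))) :
    ∃ᶠ v in 𝓝[≠] u, ℓ (f v) = ℓ (f u) := by
  have hrank : 1 < Module.rank ℝ E2 := by
    rw [← finrank_eq_rank, finrank_euclideanSpace_fin]; norm_num
  refine frequently_nhdsNE_eq_of_map_nhds_eq (g := ℓ ∘ f) hrank ?_ ?_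
  · filter_upwards [hf.1.mem_nhds hu] with v hv
    exact ℓ.continuous.continuousAt.comp (hf.contDiffAt hv).continuousAt
  · rw [← Filter.map_map, hf.map_nhds hu, hℓ, Function.comp_apply]

lemma IsChartAt.exists_three_points_of_level (hf : IsChartAt S p f U) (hu : u ∈ U)
    (hℓ : ℓ ∘L fderiv ℝ f u ≠ 0) :
    ∃ x : Fin 3 → E3, Function.Injective x ∧
      ∀ i, x i ∈ S ∧ ℓ (x i) = ℓ (f u) ∧ map ℓ (𝓝[S] (x i)) = 𝓝 (ℓ (x i)) := by
  have hopen := hf.eventually_map_nhdsWithin_eq hu hℓ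
  have hfreq : ∃ᶠ v in 𝓝[≠] u, ℓ (f v) = ℓ (f u) ∧ v ≠ u ∧
      map ℓ (𝓝[S] (f v)) = 𝓝 (ℓ (f v)) ∧ v ∈ U :=
    (hf.frequently_level_eq hu hopen.self_of_nhds).and_eventually <|
      eventually_mem_nhdsWithin.and <|
        eventually_nhdsWithin_of_eventually_nhds (hopen.and (hf.1.mem_nhds hu))
  obtain ⟨v, hv, hvu, hvopen, hvU⟩ := hfreq.exists
  obtain ⟨w, ⟨hw, hwu, hwopen, hwU⟩, hwv⟩ := (hfreq.and_eventually <|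
    eventually_nhdsWithin_of_eventually_nhds (eventually_ne_nhds hvu.symm)).exists
  have hmem : ∀ i, ![u, v, w] i ∈ U ∧ ℓ (f (![u, v, w] i)) = ℓ (f u) ∧
      map ℓ (𝓝[S] (f (![u, v, w] i))) = 𝓝 (ℓ (f (![u, v, w] i))) :=
    Fin.cases ⟨hu, rfl, hopen.self_of_nhds⟩ <|
      Fin.forall_fin_two.2 ⟨⟨hvU, hv, hvopen⟩, hwU, hw, hwopen⟩
  have hinj : Function.Injective ![u, v, w] := by
    simp [Function.Injective, Fin.forall_fin_succ, hvu, hwu, hwv, hvu.symm, hwu.symm, hwv.symm]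
  refine ⟨fun i ↦ f (![u, v, w] i), fun i j hij ↦ hinj (hf.injOn (hmem i).1 (hmem j).1 hij),
    fun i ↦ ⟨?_, (hmem i).2⟩⟩
  obtain ⟨-, -, -, -, ⟨W, -, hWS⟩, -⟩ := hf
  exact (hWS ▸ Set.mem_image_of_mem f (hmem i).1 : f _ ∈ W ∩ S).2

end Chart

/-- `x - a` is normal to the surface at a critical point `x`, hence timelike. -/
lemma IsSpacelikeSurface.mink_sub_self_neg_of_isLocalExtrOn {S : Set E3}
    (hS : IsSpacelikeSurface S) {x a : E3} (hx : x ∈ S) (hxa : x ≠ a)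
    (hextr : IsLocalExtrOn (fun y ↦ mink (y - a) (y - a)) S x) : mink (x - a) (x - a) < 0 := by
  obtain ⟨f, U, hf, htan⟩ := hS x hx
  obtain ⟨u, hu, rfl⟩ := hf.2.2.2.1
  obtain ⟨hdim, hpos⟩ := htan u hu rfl
  have hcomp : IsLocalExtr ((fun y ↦ mink (y - a) (y - a)) ∘ f) u :=
    hextr.comp_tendsto (hf.map_nhds hu).le
  have hcrit := hcomp.hasFDerivAt_eq_zero <| (hasFDerivAt_mink_sub_self a (f u)).comp u
    ((hf.contDiffAt hu).differentiableAt one_ne_zero).hasFDerivAt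
  refine mink_self_neg_of_orthogonal_spacelike hdim hpos ?_ (sub_ne_zero.2 hxa)
  rintro _ ⟨v, rfl⟩
  have hv : 2 * mink (f u - a) (fderiv ℝ f u v) = 0 := DFunLike.congr_fun hcrit v
  exact (mul_eq_zero.1 hv).resolve_left two_ne_zero

/-! ### Circles -/

/-- The signed area of the parallelogram spanned by the projections of `u` and `v` to the first
two coordinates. It measures linear independence in any plane that projects injectively. -/
def horizontalArea (u v : E3) : ℝ := u 0 * v 1 - u 1 * v 0

lemma horizontalArea_smul_add_eq_zero {n u v w : E3} (hn : mink n n < 0) (hu : mink n u = 0)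
    (hv : mink n v = 0) (hw : mink n w = 0) :
    horizontalArea u v • w + horizontalArea v w • u + horizontalArea w u • v = 0 := by
  refine eq_zero_of_orthogonal_timelike hn ?_ ?_ ?_
  · simp only [mink_add_right, mink_smul_right, hu, hv, hw, mul_zero, add_zero]
  all_goals
    simp only [PiLp.add_apply, PiLp.smul_apply, smul_eq_mul, horizontalArea]
    ring

lemma exists_eq_smul_of_horizontalArea_eq_zero {n u v : E3} (hn : mink n n < 0)
    (hu : mink n u = 0) (hv : mink n v = 0) (hu0 : u ≠ 0) (huv : horizontalArea u v = 0) :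
    ∃ t : ℝ, v = t • u := by
  have hN : u 0 ^ 2 + u 1 ^ 2 ≠ 0 := fun h ↦ hu0 <| eq_zero_of_orthogonal_timelike hn hu
    (by nlinarith [sq_nonneg (u 0), sq_nonneg (u 1)])
    (by nlinarith [sq_nonneg (u 0), sq_nonneg (u 1)])
  refine ⟨(u 0 * v 0 + u 1 * v 1) / (u 0 ^ 2 + u 1 ^ 2), sub_eq_zero.1 ?_⟩
  rw [horizontalArea] at huv
  refine eq_zero_of_orthogonal_timelike hn ?_ ?_ ?_
  · rw [mink_sub_right, mink_smul_right, hu, hv, mul_zero, sub_zero]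
  · simp only [PiLp.sub_apply, PiLp.smul_apply, smul_eq_mul]
    field_simp
    linear_combination -u 1 * huv
  · simp only [PiLp.sub_apply, PiLp.smul_apply, smul_eq_mul]
    field_simp
    linear_combination u 0 * huv

lemma horizontalArea_ne_zero_of_injective {n c : E3} {R : ℝ} {x : Fin 3 → E3}
    (hn : mink n n < 0) (hx : Function.Injective x) (hlevel : ∀ i, mink n (x i) = mink n (x 0))
    (hcircle : ∀ i, mink (x i - c) (x i - c) = R) :
    horizontalArea (x 1 - x 0) (x 2 - x 0) ≠ 0 := by
  intro harea
  have horth (i : Fin 3) : mink n (x i - x 0) = 0 := by rw [mink_sub_right, hlevel, sub_self]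
  have hu0 : x 1 - x 0 ≠ 0 := sub_ne_zero.2 (hx.ne (by decide))
  have hchord (i : Fin 3) :
      mink (x i - x 0) (x i - x 0) = 2 * mink (c - x 0) (x i - x 0) := by
    have h := (hcircle i).trans (hcircle 0).symm
    simp only [mink, PiLp.sub_apply] at h ⊢
    linear_combination h
  obtain ⟨t, ht⟩ := exists_eq_smul_of_horizontalArea_eq_zero hn (horth 1) (horth 2) hu0 harea
  have hquad : t * (t - 1) * mink (x 1 - x 0) (x 1 - x 0) = 0 := by
    have h2 := hchord 2
    rw [ht] at h2
    simp only [mink_smul_left, mink_smul_right] at h2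
    linear_combination h2 - t * hchord 1
  have hpos := mink_self_pos_of_orthogonal_timelike hn (horth 1) hu0
  rcases mul_eq_zero.1 ((mul_eq_zero.1 hquad).resolve_right hpos.ne') with rfl | h
  · exact hx.ne (by decide : (2 : Fin 3) ≠ 0) (sub_eq_zero.1 (ht.trans (zero_smul ℝ _)))
  · rw [sub_eq_zero.1 h, one_smul, sub_left_inj] at ht
    exact hx.ne (by decide : (2 : Fin 3) ≠ 1) ht

/-- The determinant, up to sign, of the matrix with rows `(1, y 0, y 1, mink y y)` for `y` equal
to `p` and to the three points `x i`: a continuous function whose vanishing says that four points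
of a spacelike plane are concyclic or collinear, without reference to a centre or to the plane. -/
def circleDet (x : Fin 3 → E3) (p : E3) : ℝ :=
  horizontalArea (x 1 - x 0) (x 2 - x 0) * (mink p p - mink (x 0) (x 0)) +
  horizontalArea (x 2 - x 0) (p - x 0) * (mink (x 1) (x 1) - mink (x 0) (x 0)) +
  horizontalArea (p - x 0) (x 1 - x 0) * (mink (x 2) (x 2) - mink (x 0) (x 0))

lemma continuous_circleDet : Continuous fun y : (Fin 3 → E3) × E3 ↦ circleDet y.1 y.2 := by
  unfold circleDet horizontalArea
  fun_prop

lemma circleDet_eq_horizontalArea_mul {n c p : E3} {R : ℝ} {x : Fin 3 → E3} (hn : mink n n < 0)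
    (hlevel : ∀ i, mink n (x i) = mink n p) (hcircle : ∀ i, mink (x i - c) (x i - c) = R) :
    circleDet x p = horizontalArea (x 1 - x 0) (x 2 - x 0) * (mink (p - c) (p - c) - R) := by
  have hself (i : Fin 3) : mink (x i) (x i) - mink (x 0) (x 0) = 2 * mink c (x i - x 0) := by
    have h := (hcircle i).trans (hcircle 0).symm
    rw [mink_sub_self, mink_sub_self] at h
    rw [mink_sub_right]
    linear_combination h
  have hdep : mink c _ = mink c 0 := congrArg (mink c) <| horizontalArea_smul_add_eq_zero hn
    (u := x 1 - x 0) (v := x 2 - x 0) (w := p - x 0)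
    (by rw [mink_sub_right, hlevel, hlevel, sub_self])
    (by rw [mink_sub_right, hlevel, hlevel, sub_self])
    (by rw [mink_sub_right, hlevel, sub_self])
  have hzero : mink c 0 = 0 := map_zero (minkBilin c)
  simp only [mink_add_right, mink_smul_right, hzero] at hdep
  rw [circleDet, hself 1, hself 2, ← hcircle 0, mink_sub_self p, mink_sub_self (x 0)]
  rw [mink_sub_right c p] at hdep
  linear_combination 2 * hdep

lemma isSpacelikePlane_mk'_ker_minkBilin (p : E3) {n : E3} (hn : mink n n < 0) :
    IsSpacelikePlane (AffineSubspace.mk' p (minkBilin n).ker) := by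
  have hne : (minkBilin n : E3 →ₗ[ℝ] ℝ) ≠ 0 := fun h ↦ hn.ne (DFunLike.congr_fun h n)
  rw [IsSpacelikePlane, IsPlane, AffineSubspace.direction_mk']
  refine ⟨?_, fun v hv ↦ mink_self_pos_of_orthogonal_timelike hn hv⟩
  have hfinrank := Module.Dual.finrank_ker_add_one_of_ne_zero hne
  rw [finrank_euclideanSpace_fin] at hfinrank
  exact Nat.succ_injective hfinrank

lemma PropertyPStar.exists_center_s9 {S : Set E3} (hP : PropertyPStar S) {n p : E3}
    (hn : mink n n < 0) (hp : p ∈ S) :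
    ∃ c R, ∀ x, mink n x = mink n p → (x ∈ S ↔ mink (x - c) (x - c) = R) := by
  have hmem (x : E3) : x ∈ AffineSubspace.mk' p (minkBilin n).ker ↔ mink n x = mink n p := by
    rw [AffineSubspace.mem_mk', LinearMap.mem_ker, ← sub_eq_zero (a := mink n x),
      ← mink_sub_right]
    rfl
  obtain ⟨c, r, -, -, hcircle⟩ :=
    hP _ (isSpacelikePlane_mk'_ker_minkBilin p hn) ⟨p, (hmem p).2 rfl, hp⟩
  refine ⟨c, r ^ 2, fun x hx ↦ ?_⟩
  have hx' := (hmem x).2 hx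
  simpa only [Set.mem_inter_iff, Set.mem_ofPred_eq, SetLike.mem_coe, hx', true_and] using
    Set.ext_iff.1 hcircle x

/-- Concyclicity of four points is a closed condition, hence inherited by the limit point `q`. -/
lemma PropertyPStar.mem_of_mem_closure {S : Set E3} (hP : PropertyPStar S) {n q : E3}
    (hn : mink n n < 0) (hq : q ∈ closure S) {x : Fin 3 → E3} (hx : Function.Injective x)
    (hxS : ∀ i, x i ∈ S) (hlevel : ∀ i, mink n (x i) = mink n q)
    (hopen : ∀ i, map (mink n) (𝓝[S] (x i)) = 𝓝 (mink n q)) : q ∈ S := by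
  have hclosure := mem_closure_setOf_level_eq (minkBilin n).continuous.continuousAt hq
    (fun i ↦ (hopen i).ge)
  have hzero : circleDet x q = 0 := by
    refine closure_minimal ?_ (isClosed_eq continuous_circleDet continuous_const) hclosure
    rintro ⟨y, p⟩ ⟨hy, hp⟩
    obtain ⟨c, R, hcircle⟩ := hP.exists_center_s9 hn hp
    have hyc (i : Fin 3) : mink (y i - c) (y i - c) = R := (hcircle _ (hy i).2).1 (hy i).1
    have hpc : mink (p - c) (p - c) = R := (hcircle p rfl).1 hp
    refine (circleDet_eq_horizontalArea_mul hn (fun i ↦ (hy i).2) hyc).trans ?_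
    rw [hpc, sub_self, mul_zero]
  obtain ⟨c, R, hcircle⟩ := hP.exists_center_s9 hn (hxS 0)
  have hlevel0 (i : Fin 3) : mink n (x i) = mink n (x 0) := (hlevel i).trans (hlevel 0).symm
  have hxc (i : Fin 3) : mink (x i - c) (x i - c) = R := (hcircle _ (hlevel0 i)).1 (hxS i)
  rw [circleDet_eq_horizontalArea_mul hn hlevel hxc] at hzero
  refine (hcircle q (hlevel 0).symm).2 (sub_eq_zero.1 ?_)
  exact (mul_eq_zero.1 hzero).resolve_left (horizontalArea_ne_zero_of_injective hn hx hlevel0 hxc)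

/-! ### The causal frontier -/

/-- Every limit point `q` of `S` missing from `S` has all of `S` inside its causal cone. This is
all that closedness of a spacelike surface needs from property 𝒫*. -/
def HasCausalFrontier (S : Set E3) : Prop :=
  ∀ q ∈ closure S, q ∉ S → ∀ x ∈ S, mink (x - q) (x - q) ≤ 0

lemma PropertyPStar.hasCausalFrontier {S : Set E3} (hP : PropertyPStar S)
    (hS : IsSpacelikeSurface S) : HasCausalFrontier S := by
  intro q hq hqS s hs
  by_contra! hpos
  obtain ⟨f, U, hf, htan⟩ := hS s hs
  obtain ⟨u, hu, rfl⟩ := hf.2.2.2.1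
  obtain ⟨hdim, hposT⟩ := htan u hu rfl
  obtain ⟨n, hn, hnq, _, ⟨v, rfl⟩, hnv⟩ :=
    exists_timelike_orthogonal_and_transversal hdim hposT hpos
  have hlevel : mink n (f u) = mink n q := sub_eq_zero.1 ((mink_sub_right n _ _).symm.trans hnq)
  obtain ⟨x, hx, hxS⟩ := hf.exists_three_points_of_level hu (ℓ := minkBilin n)
    fun h ↦ hnv (DFunLike.congr_fun h v)
  have hxlevel (i : Fin 3) : mink n (x i) = mink n q := (hxS i).2.1.trans hlevel
  exact hqS <| hP.mem_of_mem_closure hn hq hx (fun i ↦ (hxS i).1) hxlevel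
    fun i ↦ hxlevel i ▸ (hxS i).2.2

/-! ### Closedness -/

lemma exists_mem_insert_eq_of_mem_uIcc {X : Type*} [TopologicalSpace X] {S : Set X} {g : X → ℝ}
    (hg : Continuous g) (hS : IsPreconnected S) {q s : X} (hq : q ∈ closure S) (hs : s ∈ S)
    {t : ℝ} (ht : t ∈ Set.uIcc (g q) (g s)) : ∃ y ∈ insert q S, g y = t := by
  have hinsert : IsPreconnected (insert q S) := hS.subset_closure (Set.subset_insert q S)
    (Set.insert_subset hq subset_closure)
  exact (hinsert.image g hg.continuousOn).ordConnected.uIcc_subset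
    (Set.mem_image_of_mem g (Set.mem_insert q S))
    (Set.mem_image_of_mem g (Set.mem_insert_of_mem q hs)) ht

lemma exists_mem_uIcc_forall_exists_apex {q : E3} {P : E3 → Prop} (hP : ∀ᶠ a in 𝓝 q, P a)
    {t : ℝ} (ht : t ≠ q 2) :
    ∃ τ ∈ Set.uIcc (q 2) t, τ ≠ q 2 ∧ ∀ p : E3, p 2 = τ →
      ∃ a, P a ∧ mink (q - a) (q - a) ≤ 0 ∧ 0 < mink (p - a) (p - a) := by
  have hnear (d : E3) : ∀ᶠ ε in 𝓝[>] (0 : ℝ), P (q + ε • d) := by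
    have hcont : Continuous fun ε : ℝ ↦ q + ε • d := by fun_prop
    exact eventually_nhdsWithin_of_eventually_nhds <|
      hcont.continuousAt.eventually (by simpa only [zero_smul, add_zero] using hP)
  -- Of the two apexes in these directions, both at the height of `p`, one differs from `p`.
  let vertical : E3 := !₂[0, 0, t - q 2]
  let lightlike : E3 := !₂[t - q 2, 0, t - q 2]
  obtain ⟨ε, ⟨hvert, hlight⟩, hε0, hε1⟩ := (((hnear vertical).and (hnear lightlike)).and
    (Ioo_mem_nhdsGT (zero_lt_one (α := ℝ)))).exists
  refine ⟨q 2 + ε * (t - q 2), ?_, ?_, fun p hp ↦ ?_⟩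
  · rw [← segment_eq_uIcc, segment_eq_image']
    exact ⟨ε, ⟨hε0.le, hε1.le⟩, rfl⟩
  · simpa only [ne_eq, add_eq_left, mul_eq_zero, hε0.ne', sub_eq_zero, false_or] using ht
  have hpos {a : E3} (ha : p ≠ a) (ha2 : a 2 = p 2) : 0 < mink (p - a) (p - a) :=
    mink_self_pos_of_apply_two_eq_zero (sub_eq_zero.2 ha2.symm) (sub_ne_zero.2 ha)
  by_cases hpa : p = q + ε • vertical
  · refine ⟨q + ε • lightlike, hlight, ?_, hpos ?_ ?_⟩
    · simp [mink, lightlike]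
    · intro h
      have h0 := congrArg (fun x : E3 ↦ x 0) (hpa.symm.trans h)
      simp [vertical, lightlike, hε0.ne', sub_eq_zero, ht] at h0
    · simp [lightlike, hp]
  · refine ⟨q + ε • vertical, hvert, ?_, hpos hpa ?_⟩
    · simp [mink, vertical, mul_self_nonneg]
    · simp [vertical, hp]

section Closed

variable {S : Set E3} {q s : E3}

lemma HasCausalFrontier.mink_sub_self_nonpos (hS : HasCausalFrontier S) (hq : q ∈ closure S)
    (hqS : q ∉ S) {x : E3} (hx : x ∈ closure S) : mink (x - q) (x - q) ≤ 0 := by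
  have hcont : Continuous fun x ↦ mink (x - q) (x - q) := by fun_prop
  exact closure_minimal (hS q hq hqS) (isClosed_le hcont continuous_const) hx

lemma HasCausalFrontier.mink_sub_self_neg (hS : HasCausalFrontier S) (hreg : IsSpacelikeSurface S)
    (hq : q ∈ closure S) (hqS : q ∉ S) {x : E3} (hx : x ∈ S) : mink (x - q) (x - q) < 0 := by
  refine (hS q hq hqS x hx).lt_of_ne fun hzero ↦ ?_
  have hmax : IsMaxOn (fun y ↦ mink (y - q) (y - q)) S x := fun y hy ↦
    (hS q hq hqS y hy).trans_eq hzero.symm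
  exact (hreg.mink_sub_self_neg_of_isLocalExtrOn hx (ne_of_mem_of_not_mem hx hqS)
    (.inr hmax.localize)).ne hzero

lemma HasCausalFrontier.eq_of_apply_two_eq (hS : HasCausalFrontier S) (hq : q ∈ closure S)
    (hqS : q ∉ S) {x : E3} (hx : x ∈ closure S) (hx2 : x 2 = q 2) : x = q :=
  eq_of_mink_sub_self_nonpos (hS.mink_sub_self_nonpos hq hqS hx) hx2

lemma HasCausalFrontier.apply_two_ne (hS : HasCausalFrontier S) (hq : q ∈ closure S)
    (hqS : q ∉ S) (hs : s ∈ S) : s 2 ≠ q 2 := fun h ↦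
  hqS (hS.eq_of_apply_two_eq hq hqS (subset_closure hs) h ▸ hs)

lemma HasCausalFrontier.mem_of_mem_closure_of_apply_two_mem_uIcc (hS : HasCausalFrontier S)
    (hconn : IsPreconnected S) (hq : q ∈ closure S) (hqS : q ∉ S) (hs : s ∈ S) {x : E3}
    (hx : x ∈ closure S) (hx2 : x 2 ∈ Set.uIcc (q 2) (s 2)) (hxq : x ≠ q) : x ∈ S := by
  by_contra hxS
  obtain ⟨y, rfl | hyS, hy2⟩ :=
    exists_mem_insert_eq_of_mem_uIcc (g := fun y : E3 ↦ y 2) (by fun_prop) hconn hq hs hx2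
  · exact hxq (hS.eq_of_apply_two_eq hq hqS hx hy2.symm)
  · exact hxS (hS.eq_of_apply_two_eq hx hxS (subset_closure hyS) hy2 ▸ hyS)

lemma HasCausalFrontier.isCompact_closure_inter_slab (hS : HasCausalFrontier S)
    (hq : q ∈ closure S) (hqS : q ∉ S) (a b : ℝ) :
    IsCompact (closure S ∩ {x | x 2 ∈ Set.Icc a b}) := by
  have hslab : IsClosed {x : E3 | x 2 ∈ Set.Icc a b} :=
    isClosed_Icc.preimage (by fun_prop : Continuous fun x : E3 ↦ x 2)
  exact (isCompact_setOf_mink_sub_self_nonpos q a b).of_isClosed_subset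
    (isClosed_closure.inter hslab) fun x hx ↦ ⟨hS.mink_sub_self_nonpos hq hqS hx.1, hx.2⟩

lemma eventually_forall_mink_sub_self_neg {K : Set E3} (hK : IsCompact K)
    (hneg : ∀ x ∈ K, mink (x - q) (x - q) < 0) :
    ∀ᶠ a in 𝓝 q, ∀ x ∈ K, mink (x - a) (x - a) < 0 := by
  have hcont : Continuous fun y : E3 × E3 ↦ mink (y.2 - y.1) (y.2 - y.1) := by fun_prop
  exact hK.eventually_forall_of_forall_eventually fun x hx ↦
    hcont.continuousAt.eventually_lt_const (hneg x hx)

lemma IsSpacelikeSurface.mink_sub_self_nonpos_of_isCompact (hreg : IsSpacelikeSurface S)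
    {K : Set E3} (hK : IsCompact K) {a : E3}
    (hint : ∀ x ∈ K, 0 < mink (x - a) (x - a) → x ∈ S ∧ K ∈ 𝓝[S] x) :
    ∀ x ∈ K, mink (x - a) (x - a) ≤ 0 := by
  by_contra! ⟨p, hp, hpa⟩
  have hcont : Continuous fun x ↦ mink (x - a) (x - a) := by fun_prop
  obtain ⟨x, hx, hmax⟩ := hK.exists_isMaxOn ⟨p, hp⟩ hcont.continuousOn
  have hxa : 0 < mink (x - a) (x - a) := hpa.trans_le (hmax hp)
  obtain ⟨hxS, hKx⟩ := hint x hx hxa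
  have hlocal : IsLocalMaxOn (fun y ↦ mink (y - a) (y - a)) S x := by
    filter_upwards [hKx] with y hy using hmax hy
  have hne : x ≠ a := by
    rintro rfl
    simp [mink] at hxa
  exact hxa.not_gt (hreg.mink_sub_self_neg_of_isLocalExtrOn hxS hne (.inr hlocal))

lemma HasCausalFrontier.eventually_forall_slice_mink_sub_self_neg (hS : HasCausalFrontier S)
    (hreg : IsSpacelikeSurface S) (hconn : IsPreconnected S) (hq : q ∈ closure S) (hqS : q ∉ S)
    (hs : s ∈ S) : ∀ᶠ a in 𝓝 q, ∀ x ∈ closure S, x 2 = s 2 → mink (x - a) (x - a) < 0 := by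
  have hslice : ∀ x ∈ closure S ∩ {x | x 2 ∈ Set.Icc (s 2) (s 2)}, mink (x - q) (x - q) < 0 := by
    rintro x ⟨hx, hx2⟩
    have hx2 : x 2 = s 2 := le_antisymm hx2.2 hx2.1
    exact hS.mink_sub_self_neg hreg hq hqS <|
      hS.mem_of_mem_closure_of_apply_two_mem_uIcc hconn hq hqS hs hx
        (hx2 ▸ Set.right_mem_uIcc) fun h ↦ hS.apply_two_ne hq hqS hs (h ▸ hx2.symm)
  filter_upwards [eventually_forall_mink_sub_self_neg
    (hS.isCompact_closure_inter_slab hq hqS _ _) hslice] with a ha x hx hx2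
  exact ha x ⟨hx, hx2.ge, hx2.le⟩

lemma HasCausalFrontier.mink_sub_self_nonpos_of_slice_neg (hS : HasCausalFrontier S)
    (hreg : IsSpacelikeSurface S) (hconn : IsPreconnected S) (hq : q ∈ closure S) (hqS : q ∉ S)
    (hs : s ∈ S) {a : E3} (hqa : mink (q - a) (q - a) ≤ 0)
    (hslice : ∀ x ∈ closure S, x 2 = s 2 → mink (x - a) (x - a) < 0) {x : E3}
    (hx : x ∈ closure S) (hx2 : x 2 ∈ Set.uIcc (q 2) (s 2)) : mink (x - a) (x - a) ≤ 0 := by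
  refine hreg.mink_sub_self_nonpos_of_isCompact (hS.isCompact_closure_inter_slab hq hqS _ _)
    (fun y ⟨hy, hy2⟩ hya ↦ ?_) x ⟨hx, hx2⟩
  have hyq : y ≠ q := by
    rintro rfl
    exact hqa.not_gt hya
  refine ⟨hS.mem_of_mem_closure_of_apply_two_mem_uIcc hconn hq hqS hs hy hy2 hyq, ?_⟩
  have hyq2 : q 2 ≠ y 2 := fun h ↦ hyq (hS.eq_of_apply_two_eq hq hqS hy h.symm)
  have hys2 : y 2 ≠ s 2 := fun h ↦ (hslice y hy h).not_gt hya
  have hslab : Set.uIcc (q 2) (s 2) ∈ 𝓝 (y 2) := by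
    rcases Set.mem_uIcc.1 hy2 with ⟨hqy, hys⟩ | ⟨hsy, hyq⟩
    · exact mem_of_superset (Icc_mem_nhds (hqy.lt_of_ne hyq2) (hys.lt_of_ne hys2))
        Set.Icc_subset_uIcc
    · exact mem_of_superset (Icc_mem_nhds (hsy.lt_of_ne' hys2) (hyq.lt_of_ne' hyq2))
        Set.Icc_subset_uIcc'
  have hheight : Continuous fun x : E3 ↦ x 2 := by fun_prop
  exact inter_mem (mem_of_superset self_mem_nhdsWithin subset_closure)
    (mem_nhdsWithin_of_mem_nhds (hheight.continuousAt hslab))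

lemma HasCausalFrontier.isClosed (hS : HasCausalFrontier S) (hreg : IsSpacelikeSurface S)
    (hconn : IsPreconnected S) : IsClosed S := by
  refine isClosed_of_closure_subset fun q hq ↦ ?_
  by_contra hqS
  obtain ⟨s, hs⟩ : S.Nonempty := closure_nonempty_iff.1 ⟨q, hq⟩
  obtain ⟨τ, hτ, hτq, hapex⟩ := exists_mem_uIcc_forall_exists_apex
    (hS.eventually_forall_slice_mink_sub_self_neg hreg hconn hq hqS hs)
    (hS.apply_two_ne hq hqS hs)
  obtain ⟨p, rfl | hp, hpτ⟩ :=
    exists_mem_insert_eq_of_mem_uIcc (g := fun y : E3 ↦ y 2) (by fun_prop) hconn hq hs hτ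
  · exact hτq hpτ.symm
  obtain ⟨a, hslice, hqa, hpa⟩ := hapex p hpτ
  exact hpa.not_ge <| hS.mink_sub_self_nonpos_of_slice_neg hreg hconn hq hqS hs hqa hslice
    (subset_closure hp) (hpτ.symm ▸ hτ)

end Closed

/-- A nonempty connected spacelike regular surface in 𝕃³ satisfying
property 𝒫* is a closed subset of ℝ³. -/
theorem spacelike_surface_closed (S : Set E3) (hne : S.Nonempty) (hconn : IsConnected S)
    (hreg : IsSpacelikeSurface S) (hP : PropertyPStar S) :
    IsClosed S :=
  (hP.hasCausalFrontier hreg).isClosed hreg hconn.isPreconnected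
end
end
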